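/- Let s and e be composable labelled transition systems. If s eco e, then s mutually accepts e. -/

import Mathlib

/-- Labels extended with the quiescence label `δ`. -/
inductive ELabel (Lab : Type) : Type
  | lab : Lab → ELabel Lab
  | delta : ELabel Lab

namespace ELabel

/-- Membership of an extended label in `𝓛^δ = 𝓛 ∪ {δ}`. -/
def inL {Lab : Type} (Ls : Set Lab) : ELabel Lab → Prop
  | lab ℓ => ℓ ∈ Ls
  | delta => True

end ELabel

/-- A trace lies in `(𝓛^δ)*`. -/
def TraceIn {Lab : Type} (Ls : Set Lab) (σ : List (ELabel Lab)) : Prop :=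
  ∀ x ∈ σ, ELabel.inL Ls x

/-- A labelled transition system.  `T q none q'` is an internal `τ`-step,
`T q (some ℓ) q'` is a step labelled `ℓ`. -/
structure LTS (Q : Type) (Lab : Type) where
  I : Set Lab
  U : Set Lab
  T : Q → Option Lab → Q → Prop
  q0 : Q

namespace LTS

variable {Q Lab : Type}

/-- The label set `L = I ∪ U`. -/
def L (M : LTS Q Lab) : Set Lab := M.I ∪ M.U

/-- Standing assumptions on all LTSs: countable, disjoint input/output label
sets, transitions labelled within `L`, strong convergence (no infinite
`τ`-sequences), and image-finiteness. -/
def WellFormed (M : LTS Q Lab) : Prop :=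
  M.I.Countable ∧ M.U.Countable ∧ Disjoint M.I M.U ∧
  (∀ q ℓ q', M.T q (some ℓ) q' → ℓ ∈ M.L) ∧
  (¬ ∃ f : ℕ → Q, ∀ n, M.T (f n) none (f (n + 1))) ∧
  (∀ q a, {q' | M.T q a q'}.Finite)

/-- A state is quiescent if neither an output nor `τ` is enabled in it. -/
def Quiescent (M : LTS Q Lab) (q : Q) : Prop :=
  (∀ x ∈ M.U, ∀ q', ¬ M.T q (some x) q') ∧ ∀ q', ¬ M.T q none q'

/-- A single visible step `q --x--> q'` for `x ∈ L^δ`, where the quiescence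
label `δ` gives a self-loop at quiescent states. -/
def VStep (M : LTS Q Lab) (q : Q) : ELabel Lab → Q → Prop
  | .lab ℓ, q' => M.T q (some ℓ) q'
  | .delta, q' => q' = q ∧ M.Quiescent q

/-- Zero or more `τ`-steps: `q ==ε==> q'`. -/
def Eps (M : LTS Q Lab) : Q → Q → Prop :=
  Relation.ReflTransGen fun a b => M.T a none b

/-- Weak transition `q ==σ==> q'` for `σ ∈ (L^δ)*`. -/
inductive W (M : LTS Q Lab) : Q → List (ELabel Lab) → Q → Prop
  | nil {q q' : Q} : M.Eps q q' → W M q [] q'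
  | snoc {q q1 q2 q' : Q} {σ : List (ELabel Lab)} {x : ELabel Lab} :
      W M q σ q1 → M.VStep q1 x q2 → M.Eps q2 q' → W M q (σ ++ [x]) q'

/-- `X after σ`, for a set of states `X`. -/
def afterSet (M : LTS Q Lab) (X : Set Q) (σ : List (ELabel Lab)) : Set Q :=
  {q' | ∃ q ∈ X, M.W q σ q'}

/-- `M after σ`, from the initial state. -/
def after (M : LTS Q Lab) (σ : List (ELabel Lab)) : Set Q :=
  {q' | M.W M.q0 σ q'}

/-- The predicate underlying `out(q) ⊆ U ∪ {δ}`. -/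
def outLabel (M : LTS Q Lab) (q : Q) : ELabel Lab → Prop
  | .lab ℓ => ℓ ∈ M.U ∧ ∃ q', M.T q (some ℓ) q'
  | .delta => M.Quiescent q

/-- `out(q)`. -/
def outq (M : LTS Q Lab) (q : Q) : Set (ELabel Lab) :=
  {x | M.outLabel q x}

/-- `in(q) = {ℓ ∈ I | q ==ℓ==>}`. -/
def inq (M : LTS Q Lab) (q : Q) : Set Lab :=
  {ℓ | ℓ ∈ M.I ∧ ∃ q', M.W q [ELabel.lab ℓ] q'}

/-- `out(X) = ⋃_{q ∈ X} out(q)`. -/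
def outSet (M : LTS Q Lab) (X : Set Q) : Set (ELabel Lab) :=
  ⋃ q ∈ X, M.outq q

/-- `in(X) = ⋂_{q ∈ X} in(q)`. -/
def inSet (M : LTS Q Lab) (X : Set Q) : Set Lab :=
  ⋂ q ∈ X, M.inq q

/-- Input-enabledness: `M` is an IOTS. -/
def InputEnabled (M : LTS Q Lab) : Prop :=
  ∀ q, ∀ ℓ ∈ M.I, ∃ q', M.W q [ELabel.lab ℓ] q'

/-- `Utraces(M)`. -/
def Utraces (M : LTS Q Lab) : Set (List (ELabel Lab)) :=
  {σ | TraceIn M.L σ ∧ (∃ q', M.W M.q0 σ q') ∧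
    ∀ σ1 ℓ σ2, σ = σ1 ++ ELabel.lab ℓ :: σ2 → ℓ ∈ M.I →
      ∀ q, M.W M.q0 σ1 q → ∃ q', M.W q [ELabel.lab ℓ] q'}

/-- An LTS is utrace-closed when every trace over `(L^δ)*` that it can
perform is a utrace. -/
def UtraceClosed (M : LTS Q Lab) : Prop :=
  ∀ σ : List (ELabel Lab), TraceIn M.L σ → (∃ q', M.W M.q0 σ q') → σ ∈ M.Utraces

end LTS

/-- `i uioco s`. -/
def Uioco {Qi Qs Lab : Type} (i : LTS Qi Lab) (s : LTS Qs Lab) : Prop :=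
  ∀ σ ∈ s.Utraces, i.outSet (i.after σ) ⊆ s.outSet (s.after σ)

/-- Composability: disjoint output label sets. -/
def Composable {Qs Qe Lab : Type} (s : LTS Qs Lab) (e : LTS Qe Lab) : Prop :=
  s.U ∩ e.U = ∅

/-- Parallel composition `s ∥ e`. -/
def par {Qs Qe Lab : Type} (s : LTS Qs Lab) (e : LTS Qe Lab) : LTS (Qs × Qe) Lab where
  I := (s.I \ e.U) ∪ (e.I \ s.U)
  U := s.U ∪ e.U
  T := fun p a p' =>
    match a with
    | none =>
        (s.T p.1 none p'.1 ∧ p'.2 = p.2) ∨ (e.T p.2 none p'.2 ∧ p'.1 = p.1)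
    | some ℓ =>
        (ℓ ∈ s.L ∧ ℓ ∉ e.L ∧ s.T p.1 (some ℓ) p'.1 ∧ p'.2 = p.2) ∨
        (ℓ ∈ e.L ∧ ℓ ∉ s.L ∧ e.T p.2 (some ℓ) p'.2 ∧ p'.1 = p.1) ∨
        (ℓ ∈ s.L ∧ ℓ ∈ e.L ∧ s.T p.1 (some ℓ) p'.1 ∧ e.T p.2 (some ℓ) p'.2)
  q0 := (s.q0, e.q0)

/-- `s accepts e`: along utraces of `s ∥ e`, every output of `e` that is an
input of `s` is (weakly) enabled in `s`. -/
def Accepts {Qs Qe Lab : Type} (s : LTS Qs Lab) (e : LTS Qe Lab) : Prop :=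
  ∀ σ ∈ (par s e).Utraces, ∀ qs qe, (par s e).W (par s e).q0 σ (qs, qe) →
    ∀ ℓ, ELabel.lab ℓ ∈ e.outq qe → ℓ ∈ s.I → ℓ ∈ s.inq qs

/-- `s mutually accepts e`. -/
def MutuallyAccepts {Qs Qe Lab : Type} (s : LTS Qs Lab) (e : LTS Qe Lab) : Prop :=
  Accepts s e ∧ Accepts e s

/-- `R` is an ecosim for `s` and `e`. -/
def IsEcosim {Qs Qe Lab : Type} (s : LTS Qs Lab) (e : LTS Qe Lab)
    (R : Set (Set Qs × Set Qe)) : Prop :=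
  (s.after [], e.after []) ∈ R ∧
  ∀ Xs Xe, (Xs, Xe) ∈ R →
    (∀ ℓ, ELabel.lab ℓ ∈ e.outSet Xe → ℓ ∈ s.I →
      ℓ ∈ s.inSet Xs ∧
        (s.afterSet Xs [ELabel.lab ℓ], e.afterSet Xe [ELabel.lab ℓ]) ∈ R) ∧
    (∀ ℓ, ELabel.lab ℓ ∈ s.outSet Xs → ℓ ∈ e.I →
      ℓ ∈ e.inSet Xe ∧
        (s.afterSet Xs [ELabel.lab ℓ], e.afterSet Xe [ELabel.lab ℓ]) ∈ R) ∧
    (∀ ℓ, (ELabel.lab ℓ ∈ e.outSet Xe ∨ ℓ ∈ e.inSet Xe) → ℓ ∉ s.L →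
      (Xs, e.afterSet Xe [ELabel.lab ℓ]) ∈ R) ∧
    (∀ ℓ, (ELabel.lab ℓ ∈ s.outSet Xs ∨ ℓ ∈ s.inSet Xs) → ℓ ∉ e.L →
      (s.afterSet Xs [ELabel.lab ℓ], Xe) ∈ R) ∧
    (∀ ℓ, ℓ ∈ s.inSet Xs → ℓ ∈ e.inSet Xe →
      (s.afterSet Xs [ELabel.lab ℓ], e.afterSet Xe [ELabel.lab ℓ]) ∈ R) ∧
    (ELabel.delta ∈ s.outSet Xs → ELabel.delta ∈ e.outSet Xe →
      (s.afterSet Xs [ELabel.delta], e.afterSet Xe [ELabel.delta]) ∈ R)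

/-- `s eco e`: there exists an ecosim for `s` and `e`. -/
def Eco {Qs Qe Lab : Type} (s : LTS Qs Lab) (e : LTS Qe Lab) : Prop :=
  ∃ R, IsEcosim s e R

/-- `R_U(s,e)`: the smallest relation closed under the given rules. -/
inductive RU {Qs Qe Lab : Type} (s : LTS Qs Lab) (e : LTS Qe Lab) :
    Set Qs → Set Qe → Prop
  | base : RU s e (s.after []) (e.after [])
  | syncOutE {Xs : Set Qs} {Xe : Set Qe} (ℓ : Lab) :
      RU s e Xs Xe → ELabel.lab ℓ ∈ e.outSet Xe → ℓ ∈ s.I →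
      RU s e (s.afterSet Xs [ELabel.lab ℓ]) (e.afterSet Xe [ELabel.lab ℓ])
  | syncOutS {Xs : Set Qs} {Xe : Set Qe} (ℓ : Lab) :
      RU s e Xs Xe → ELabel.lab ℓ ∈ s.outSet Xs → ℓ ∈ e.I →
      RU s e (s.afterSet Xs [ELabel.lab ℓ]) (e.afterSet Xe [ELabel.lab ℓ])
  | internalE {Xs : Set Qs} {Xe : Set Qe} (ℓ : Lab) :
      RU s e Xs Xe → (ELabel.lab ℓ ∈ e.outSet Xe ∨ ℓ ∈ e.inSet Xe) → ℓ ∉ s.L →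
      RU s e Xs (e.afterSet Xe [ELabel.lab ℓ])
  | internalS {Xs : Set Qs} {Xe : Set Qe} (ℓ : Lab) :
      RU s e Xs Xe → (ELabel.lab ℓ ∈ s.outSet Xs ∨ ℓ ∈ s.inSet Xs) → ℓ ∉ e.L →
      RU s e (s.afterSet Xs [ELabel.lab ℓ]) Xe
  | syncIn {Xs : Set Qs} {Xe : Set Qe} (ℓ : Lab) :
      RU s e Xs Xe → ℓ ∈ s.inSet Xs → ℓ ∈ e.inSet Xe →
      RU s e (s.afterSet Xs [ELabel.lab ℓ]) (e.afterSet Xe [ELabel.lab ℓ])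
  | qdelta {Xs : Set Qs} {Xe : Set Qe} :
      RU s e Xs Xe → ELabel.delta ∈ s.outSet Xs → ELabel.delta ∈ e.outSet Xe →
      RU s e (s.afterSet Xs [ELabel.delta]) (e.afterSet Xe [ELabel.delta])

open Classical in
/-- Projection `σ↾𝓛^δ` of a trace onto an (extended) label set: keeps `δ`
and the labels in `Ls`, removes all other labels. -/
noncomputable def projD {Lab : Type} (σ : List (ELabel Lab)) (Ls : Set Lab) :
    List (ELabel Lab) :=
  σ.filter fun x => decide (ELabel.inL Ls x)

open Classical in
/-- Projection `σ↾𝓛` of a trace of plain labels onto a label set. -/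
noncomputable def projL {Lab : Type} (σ : List Lab) (Ls : Set Lab) : List Lab :=
  σ.filter fun ℓ => decide (ℓ ∈ Ls)

open Classical in
/-- Substitution `σ[θ/δ]` of the label `θ` by the quiescence label `δ`. -/
noncomputable def substTheta {Lab : Type} (θ : Lab) (σ : List Lab) :
    List (ELabel Lab) :=
  σ.map fun ℓ => if ℓ = θ then ELabel.delta else ELabel.lab ℓ

/-- `⟨X⟩`: componentwise collection of a set of pairs of states. -/
def collect {Qs Qe : Type} (X : Set (Qs × Qe)) : Set Qs × Set Qe :=
  (Prod.fst '' X, Prod.snd '' X)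

/-- `q_s accepts q_e over σ`. -/
def AcceptsOver {Qs Qe Lab : Type} (s : LTS Qs Lab) (e : LTS Qe Lab)
    (qs : Qs) (qe : Qe) (σ : List (ELabel Lab)) : Prop :=
  ∀ σ1 σ2 : List (ELabel Lab), σ1 ++ σ2 = σ →
    ∀ (qs' : Qs) (qe' : Qe), (par s e).W (qs, qe) σ1 (qs', qe') →
      ∀ ℓ, ELabel.lab ℓ ∈ e.outq qe' → ℓ ∈ s.I → ℓ ∈ s.inq qs' ∧ ℓ ∈ e.U

/-- `q_s mutually accepts q_e over σ`. -/
def MutuallyAcceptsOver {Qs Qe Lab : Type} (s : LTS Qs Lab) (e : LTS Qe Lab)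
    (qs : Qs) (qe : Qe) (σ : List (ELabel Lab)) : Prop :=
  AcceptsOver s e qs qe σ ∧ AcceptsOver e s qe qs σ

/-- A test case: a quasi-finite tree-shaped LTS without `τ`-transitions, with
terminal states `pass` and `fail` carrying input self-loops, a special
quiescence-observation input `θ`, at most one output transition per state,
and receptive to all inputs other than `θ`. -/
structure TestCase (Qt Lab : Type) extends LTS Qt Lab where
  passS : Qt
  failS : Qt
  theta : Lab
  theta_input : theta ∈ I
  no_tau : ∀ q q', ¬ T q none q'
  tree : ∀ q, q ≠ q0 → q ≠ passS → q ≠ failS →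
    ∃! p : Qt × Option Lab, T p.1 p.2 q
  pass_loops : ∀ ℓ ∈ I, T passS (some ℓ) passS
  pass_terminal : ∀ a q', T passS a q' → q' = passS ∧ ∃ ℓ ∈ I, a = some ℓ
  fail_loops : ∀ ℓ ∈ I, T failS (some ℓ) failS
  fail_terminal : ∀ a q', T failS a q' → q' = failS ∧ ∃ ℓ ∈ I, a = some ℓ
  one_output : ∀ q ℓ ℓ' q' q'', ℓ ∈ U → ℓ' ∈ U →
    T q (some ℓ) q' → T q (some ℓ') q'' → ℓ = ℓ' ∧ q' = q''
  receptive : ∀ q, ∀ ℓ ∈ I, ℓ ≠ theta → ∃ q', T q (some ℓ) q'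

/-- Test execution `t ⫿ i` of a test case `t` with an implementation `i`. -/
def testExec {Qt Qi Lab : Type} (t : TestCase Qt Lab) (i : LTS Qi Lab) :
    LTS (Qt × Qi) Lab where
  I := ∅
  U := i.U ∪ (t.toLTS.L \ {t.theta})
  T := fun p a p' =>
    match a with
    | none => i.T p.2 none p'.2 ∧ p'.1 = p.1
    | some ℓ =>
        (ℓ ∈ i.L ∧ ℓ ∉ t.toLTS.L ∧ i.T p.2 (some ℓ) p'.2 ∧ p'.1 = p.1) ∨
        (ℓ ∈ t.toLTS.L ∧ ℓ ∉ i.L ∧ ℓ ≠ t.theta ∧ t.T p.1 (some ℓ) p'.1 ∧ p'.2 = p.2) ∨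
        (ℓ ∈ i.L ∧ ℓ ∈ t.toLTS.L ∧ t.T p.1 (some ℓ) p'.1 ∧ i.T p.2 (some ℓ) p'.2) ∨
        (ℓ = t.theta ∧ t.T p.1 (some ℓ) p'.1 ∧ p'.2 = p.2 ∧ i.Quiescent p.2)
  q0 := (t.q0, i.q0)

/-!
Along a utrace `σ` of `s ∥ e`, the set of states reached by `s ∥ e` is the full product of the sets
reached by `s` and by `e` along the projections of `σ`, and these two sets are related by every
ecosim. For ordinary labels the product form is automatic. For `δ` it requires that a quiescent
state of `s ∥ e` be quiescent in both components: an output blocked by the other component would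
violate the acceptance clauses of the ecosim. In turn, the product form lets an input enabled in all
reachable states of `s ∥ e` be recognised as enabled in all reachable states of each component,
which is what the remaining ecosim clauses ask for. Acceptance can then be read off from the ecosim.
-/

namespace LTS

variable {Q Lab : Type} {M : LTS Q Lab} {q q' q'' : Q} {X : Set Q}
  {σ τ : List (ELabel Lab)} {x : ELabel Lab} {ℓ : Lab}

theorem I_subset_L : M.I ⊆ M.L := Set.subset_union_left

theorem U_subset_L : M.U ⊆ M.L := Set.subset_union_right

theorem W_nil_iff : M.W q [] q' ↔ M.Eps q q' := by
  refine ⟨fun h => ?_, W.nil⟩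
  generalize hσ : ([] : List (ELabel Lab)) = σ at h
  cases h with
  | nil h => exact h
  | snoc => simp at hσ

theorem W_append_singleton_iff :
    M.W q (σ ++ [x]) q' ↔ ∃ q₁ q₂, M.W q σ q₁ ∧ M.VStep q₁ x q₂ ∧ M.Eps q₂ q' := by
  refine ⟨fun h => ?_, fun ⟨_, _, hσ, hx, hε⟩ => W.snoc hσ hx hε⟩
  generalize hτ : σ ++ [x] = τ at h
  cases h with
  | nil => simp at hτ
  | snoc hσ hx hε =>
    obtain ⟨rfl, hxx⟩ := List.append_inj' hτ rfl
    obtain rfl := List.singleton_injective hxx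
    exact ⟨_, _, hσ, hx, hε⟩

theorem W_singleton_iff :
    M.W q [x] q' ↔ ∃ q₁ q₂, M.Eps q q₁ ∧ M.VStep q₁ x q₂ ∧ M.Eps q₂ q' := by
  simpa only [List.nil_append, W_nil_iff] using W_append_singleton_iff (σ := [])

theorem W.trans_eps (hσ : M.W q σ q') (hε : M.Eps q' q'') : M.W q σ q'' := by
  cases hσ with
  | nil h => exact W.nil (h.trans hε)
  | snoc hσ hx h => exact W.snoc hσ hx (h.trans hε)

theorem W_append_iff : M.W q (σ ++ τ) q' ↔ ∃ q₁, M.W q σ q₁ ∧ M.W q₁ τ q' := by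
  induction τ using List.reverseRecOn generalizing q' with
  | nil =>
    simp only [List.append_nil, W_nil_iff]
    exact ⟨fun h => ⟨q', h, .refl⟩, fun ⟨_, hσ, hε⟩ => hσ.trans_eps hε⟩
  | append_singleton τ x ih =>
    simp only [← List.append_assoc, W_append_singleton_iff, ih]
    tauto

theorem Eps.eq_of_no_tau (hq : ∀ q', ¬ M.T q none q') (h : M.Eps q q') : q = q' := by
  rcases Relation.ReflTransGen.cases_head h with rfl | ⟨q₁, hτ, -⟩
  · rfl
  · exact absurd hτ (hq q₁)

theorem W.exists_T_of_no_tau (hq : ∀ q', ¬ M.T q none q') (h : M.W q [.lab ℓ] q') :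
    ∃ q₂, M.T q (some ℓ) q₂ := by
  obtain ⟨q₁, q₂, hε, hℓ, -⟩ := W_singleton_iff.1 h
  obtain rfl := hε.eq_of_no_tau hq
  exact ⟨q₂, hℓ⟩

theorem W_delta_iff : M.W q [.delta] q' ↔ M.Eps q q' ∧ M.Quiescent q' := by
  rw [W_singleton_iff]
  constructor
  · rintro ⟨q₁, _, hε, ⟨rfl, hδ⟩, hε'⟩
    obtain rfl := hε'.eq_of_no_tau hδ.2
    exact ⟨hε, hδ⟩
  · rintro ⟨hε, hδ⟩
    exact ⟨q', q', hε, ⟨rfl, hδ⟩, .refl⟩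

theorem after_append : M.after (σ ++ τ) = M.afterSet (M.after σ) τ :=
  Set.ext fun _ => W_append_iff

theorem mem_after_append_delta_iff :
    q ∈ M.after (σ ++ [.delta]) ↔ q ∈ M.after σ ∧ M.Quiescent q := by
  rw [after_append]
  constructor
  · rintro ⟨q₁, hσ, hδ⟩
    obtain ⟨hε, hq⟩ := W_delta_iff.1 hδ
    exact ⟨hσ.trans_eps hε, hq⟩
  · rintro ⟨hσ, hq⟩
    exact ⟨q, hσ, W_delta_iff.2 ⟨.refl, hq⟩⟩

theorem mem_outSet_iff : x ∈ M.outSet X ↔ ∃ q ∈ X, x ∈ M.outq q := by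
  simp only [outSet, Set.mem_iUnion, exists_prop]

theorem mem_inSet_iff : ℓ ∈ M.inSet X ↔ ∀ q ∈ X, ℓ ∈ M.inq q :=
  Set.mem_iInter₂

theorem mem_outSet_after_of_nonempty (hx : x.inL M.U) (h : (M.after (σ ++ [x])).Nonempty) :
    x ∈ M.outSet (M.after σ) := by
  obtain ⟨q', hq'⟩ := h
  obtain ⟨q₁, q₂, hσ, hstep, -⟩ := W_append_singleton_iff.1 hq'
  refine mem_outSet_iff.2 ⟨q₁, hσ, ?_⟩
  cases x with
  | lab ℓ => exact ⟨hx, q₂, hstep⟩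
  | delta => exact hstep.2

theorem nonempty_after_of_mem_Utraces (h : σ ∈ M.Utraces) : (M.after σ).Nonempty :=
  h.2.1

theorem mem_Utraces_of_append (h : σ ++ τ ∈ M.Utraces) : σ ∈ M.Utraces := by
  obtain ⟨hL, ⟨q', hq'⟩, hin⟩ := h
  obtain ⟨q₁, hσ, -⟩ := W_append_iff.1 hq'
  refine ⟨fun x hx => hL x (List.mem_append_left τ hx), ⟨q₁, hσ⟩, fun σ₁ ℓ σ₂ hdec => ?_⟩
  exact hin σ₁ ℓ (σ₂ ++ τ) (by rw [hdec, List.append_assoc, List.cons_append])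

theorem lab_mem_L_of_append_mem_Utraces (h : σ ++ [.lab ℓ] ∈ M.Utraces) : ℓ ∈ M.L :=
  h.1 (.lab ℓ) (List.mem_append_right σ (List.mem_singleton_self _))

theorem lab_mem_inSet_after_of_append_mem_Utraces (h : σ ++ [.lab ℓ] ∈ M.Utraces)
    (hℓ : ℓ ∈ M.I) : ℓ ∈ M.inSet (M.after σ) :=
  mem_inSet_iff.2 fun q hq => ⟨hℓ, h.2.2 σ ℓ [] rfl hℓ q hq⟩

end LTS

section Projection

variable {Lab : Type} {Ls : Set Lab} {ℓ : Lab}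

theorem projD_append (σ τ : List (ELabel Lab)) (Ls : Set Lab) :
    projD (σ ++ τ) Ls = projD σ Ls ++ projD τ Ls :=
  List.filter_append σ τ

theorem projD_lab_of_mem (hℓ : ℓ ∈ Ls) : projD [.lab ℓ] Ls = [.lab ℓ] := by
  simp [projD, ELabel.inL, hℓ]

theorem projD_lab_of_notMem (hℓ : ℓ ∉ Ls) : projD [.lab ℓ] Ls = [] := by
  simp [projD, ELabel.inL, hℓ]

theorem projD_delta : projD [.delta] Ls = [.delta] := by
  have hδ : ELabel.inL Ls .delta := trivial
  simp [projD, hδ]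

end Projection

section Parallel

open LTS

variable {Qs Qe Lab : Type} {s : LTS Qs Lab} {e : LTS Qe Lab} {p p' : Qs × Qe}
  {qs : Qs} {qe : Qe} {X : Set Qs} {Y : Set Qe} {σ σs σe : List (ELabel Lab)} {ℓ : Lab}

theorem Composable.symm (hcomp : Composable s e) : Composable e s :=
  (Set.inter_comm e.U s.U).trans hcomp

theorem Composable.notMem_right (hcomp : Composable s e) (hℓ : ℓ ∈ s.U) : ℓ ∉ e.U :=
  Set.disjoint_left.1 (Set.disjoint_iff_inter_eq_empty.2 hcomp) hℓ

theorem L_par : (par s e).L = s.L ∪ e.L := by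
  ext ℓ
  simp only [L, par, Set.mem_union, Set.mem_sdiff]
  tauto

theorem T_par_swap_iff {a : Option Lab} :
    (par e s).T p.swap a p'.swap ↔ (par s e).T p a p' := by
  cases a <;> simp only [par, Prod.fst_swap, Prod.snd_swap] <;> tauto

theorem quiescent_par_swap_iff : (par e s).Quiescent p.swap ↔ (par s e).Quiescent p := by
  have hU : (par e s).U = (par s e).U := Set.union_comm e.U s.U
  simp only [Quiescent, hU, ← T_par_swap_iff (s := s), Prod.forall, Prod.swap_prod_mk]
  exact and_congr (forall₂_congr fun _ _ => forall_comm) forall_comm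

theorem T_par_left_iff (hs : ℓ ∈ s.L) (he : ℓ ∉ e.L) :
    (par s e).T p (some ℓ) p' ↔ s.T p.1 (some ℓ) p'.1 ∧ p'.2 = p.2 := by
  simp [par, hs, he]

theorem T_par_right_iff (hs : ℓ ∉ s.L) (he : ℓ ∈ e.L) :
    (par s e).T p (some ℓ) p' ↔ e.T p.2 (some ℓ) p'.2 ∧ p'.1 = p.1 := by
  simp [par, hs, he]

theorem T_par_sync_iff (hs : ℓ ∈ s.L) (he : ℓ ∈ e.L) :
    (par s e).T p (some ℓ) p' ↔ s.T p.1 (some ℓ) p'.1 ∧ e.T p.2 (some ℓ) p'.2 := by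
  simp [par, hs, he]

theorem T_fst_of_T_par (hs : ℓ ∈ s.L) (h : (par s e).T p (some ℓ) p') :
    s.T p.1 (some ℓ) p'.1 := by
  by_cases he : ℓ ∈ e.L
  · exact ((T_par_sync_iff hs he).1 h).1
  · exact ((T_par_left_iff hs he).1 h).1

theorem eps_par_iff : (par s e).Eps p p' ↔ s.Eps p.1 p'.1 ∧ e.Eps p.2 p'.2 := by
  constructor
  · intro h
    induction h with
    | refl => exact ⟨.refl, .refl⟩
    | tail _ hτ ih =>
      rcases hτ with ⟨hτ, heq⟩ | ⟨hτ, heq⟩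
      · exact ⟨ih.1.tail hτ, heq ▸ ih.2⟩
      · exact ⟨heq ▸ ih.1, ih.2.tail hτ⟩
  · rintro ⟨hs, he⟩
    have left : (par s e).Eps (p.1, p.2) (p'.1, p.2) :=
      hs.lift (fun q => (q, p.2)) fun _ _ hτ => Or.inl ⟨hτ, rfl⟩
    have right : (par s e).Eps (p'.1, p.2) (p'.1, p'.2) :=
      he.lift (fun q => (p'.1, q)) fun _ _ hτ => Or.inr ⟨hτ, rfl⟩
    exact left.trans right

theorem W_par_lab_iff (hℓ : ℓ ∈ s.L ∪ e.L) :
    (par s e).W p [.lab ℓ] p' ↔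
      s.W p.1 (projD [.lab ℓ] s.L) p'.1 ∧ e.W p.2 (projD [.lab ℓ] e.L) p'.2 := by
  rw [W_singleton_iff]
  by_cases hs : ℓ ∈ s.L <;> by_cases he : ℓ ∈ e.L
  · simp only [projD_lab_of_mem hs, projD_lab_of_mem he, W_singleton_iff, VStep,
      T_par_sync_iff hs he, eps_par_iff]
    constructor
    · rintro ⟨p₁, p₂, ⟨εs, εe⟩, ⟨ts, te⟩, εs', εe'⟩
      exact ⟨⟨p₁.1, p₂.1, εs, ts, εs'⟩, p₁.2, p₂.2, εe, te, εe'⟩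
    · rintro ⟨⟨qs₁, qs₂, εs, ts, εs'⟩, qe₁, qe₂, εe, te, εe'⟩
      exact ⟨(qs₁, qe₁), (qs₂, qe₂), ⟨εs, εe⟩, ⟨ts, te⟩, εs', εe'⟩
  · simp only [projD_lab_of_mem hs, projD_lab_of_notMem he, W_singleton_iff, W_nil_iff, VStep,
      T_par_left_iff hs he, eps_par_iff]
    constructor
    · rintro ⟨p₁, p₂, ⟨εs, εe⟩, ⟨ts, stay⟩, εs', εe'⟩
      exact ⟨⟨p₁.1, p₂.1, εs, ts, εs'⟩, εe.trans (stay ▸ εe')⟩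
    · rintro ⟨⟨qs₁, qs₂, εs, ts, εs'⟩, εe⟩
      exact ⟨(qs₁, p'.2), (qs₂, p'.2), ⟨εs, εe⟩, ⟨ts, rfl⟩, εs', .refl⟩
  · simp only [projD_lab_of_notMem hs, projD_lab_of_mem he, W_singleton_iff, W_nil_iff, VStep,
      T_par_right_iff hs he, eps_par_iff]
    constructor
    · rintro ⟨p₁, p₂, ⟨εs, εe⟩, ⟨te, stay⟩, εs', εe'⟩
      exact ⟨εs.trans (stay ▸ εs'), p₁.2, p₂.2, εe, te, εe'⟩
    · rintro ⟨εs, qe₁, qe₂, εe, te, εe'⟩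
      exact ⟨(p'.1, qe₁), (p'.1, qe₂), ⟨εs, εe⟩, ⟨te, rfl⟩, .refl, εe'⟩
  · exact (hℓ.elim hs he).elim

theorem after_par_append_lab (hℓ : ℓ ∈ s.L ∪ e.L)
    (hσ : (par s e).after σ = s.after σs ×ˢ e.after σe) :
    (par s e).after (σ ++ [.lab ℓ]) =
      s.after (σs ++ projD [.lab ℓ] s.L) ×ˢ e.after (σe ++ projD [.lab ℓ] e.L) := by
  ext p'
  simp only [after_append, hσ, afterSet, W_par_lab_iff hℓ, Set.mem_prod, Set.mem_ofPred_eq]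
  constructor
  · rintro ⟨p, ⟨hs, he⟩, hs', he'⟩
    exact ⟨⟨p.1, hs, hs'⟩, ⟨p.2, he, he'⟩⟩
  · rintro ⟨⟨qs, hs, hs'⟩, ⟨qe, he, he'⟩⟩
    exact ⟨(qs, qe), ⟨hs, he⟩, hs', he'⟩

theorem mem_inSet_fst_of_mem_inSet_par (hℓ : ℓ ∈ s.I) (hY : Y.Nonempty)
    (h : ℓ ∈ (par s e).inSet (X ×ˢ Y)) : ℓ ∈ s.inSet X := by
  obtain ⟨qe, hqe⟩ := hY
  refine mem_inSet_iff.2 fun qs hqs => ⟨hℓ, ?_⟩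
  obtain ⟨-, p', hp'⟩ := mem_inSet_iff.1 h (qs, qe) ⟨hqs, hqe⟩
  have hproj := ((W_par_lab_iff (Or.inl (I_subset_L hℓ))).1 hp').1
  rw [projD_lab_of_mem (I_subset_L hℓ)] at hproj
  exact ⟨p'.1, hproj⟩

theorem mem_inSet_snd_of_mem_inSet_par (hℓ : ℓ ∈ e.I) (hX : X.Nonempty)
    (h : ℓ ∈ (par s e).inSet (X ×ˢ Y)) : ℓ ∈ e.inSet Y := by
  obtain ⟨qs, hqs⟩ := hX
  refine mem_inSet_iff.2 fun qe hqe => ⟨hℓ, ?_⟩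
  obtain ⟨-, p', hp'⟩ := mem_inSet_iff.1 h (qs, qe) ⟨hqs, hqe⟩
  have hproj := ((W_par_lab_iff (Or.inr (I_subset_L hℓ))).1 hp').2
  rw [projD_lab_of_mem (I_subset_L hℓ)] at hproj
  exact ⟨p'.2, hproj⟩

/-- The state `qs` of `s` accepts the state `qe` of `e`: `out(qe) ∩ I_s ⊆ in(qs)`. This is the
condition that `Accepts` imposes on each state reached along a utrace of `s ∥ e`. -/
def AcceptsAt (s : LTS Qs Lab) (e : LTS Qe Lab) (qs : Qs) (qe : Qe) : Prop :=
  ∀ ℓ, ELabel.lab ℓ ∈ e.outq qe → ℓ ∈ s.I → ℓ ∈ s.inq qs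

theorem quiescent_par_of_quiescent (hs : s.Quiescent qs) (he : e.Quiescent qe) :
    (par s e).Quiescent (qs, qe) := by
  refine ⟨fun ℓ hℓ p' hstep => ?_, fun p' hτ => ?_⟩
  · rcases hℓ with hℓ | hℓ
    · exact hs.1 ℓ hℓ p'.1 (T_fst_of_T_par (U_subset_L hℓ) hstep)
    · exact he.1 ℓ hℓ p'.2 (T_fst_of_T_par (U_subset_L hℓ) (T_par_swap_iff.2 hstep))
  · exact hτ.elim (fun h => hs.2 _ h.1) fun h => he.2 _ h.1

theorem quiescent_fst_of_quiescent_par (hcomp : Composable s e) (hacc : AcceptsAt e s qe qs)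
    (h : (par s e).Quiescent (qs, qe)) : s.Quiescent qs := by
  obtain ⟨hout, hτ⟩ := h
  refine ⟨fun ℓ hℓ qs' hstep => ?_, fun qs' hτs => hτ (qs', qe) (Or.inl ⟨hτs, rfl⟩)⟩
  by_cases hℓe : ℓ ∈ e.L
  · have hℓI : ℓ ∈ e.I := hℓe.resolve_right (hcomp.notMem_right hℓ)
    have hτe : ∀ qe', ¬ e.T qe none qe' := fun qe' hτe => hτ (qs, qe') (Or.inr ⟨hτe, rfl⟩)
    obtain ⟨-, qe', hW⟩ := hacc ℓ ⟨hℓ, qs', hstep⟩ hℓI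
    obtain ⟨qe₂, hstepe⟩ := hW.exists_T_of_no_tau hτe
    exact hout ℓ (Or.inl hℓ) (qs', qe₂)
      ((T_par_sync_iff (U_subset_L hℓ) hℓe).2 ⟨hstep, hstepe⟩)
  · exact hout ℓ (Or.inl hℓ) (qs', qe) ((T_par_left_iff (U_subset_L hℓ) hℓe).2 ⟨hstep, rfl⟩)

theorem quiescent_par_iff (hcomp : Composable s e) (hse : AcceptsAt s e qs qe)
    (hes : AcceptsAt e s qe qs) :
    (par s e).Quiescent (qs, qe) ↔ s.Quiescent qs ∧ e.Quiescent qe :=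
  ⟨fun h => ⟨quiescent_fst_of_quiescent_par hcomp hes h,
      quiescent_fst_of_quiescent_par hcomp.symm hse (quiescent_par_swap_iff.2 h)⟩,
    fun h => quiescent_par_of_quiescent h.1 h.2⟩

theorem after_par_append_delta (hcomp : Composable s e)
    (hσ : (par s e).after σ = s.after σs ×ˢ e.after σe)
    (hacc : ∀ qs ∈ s.after σs, ∀ qe ∈ e.after σe, AcceptsAt s e qs qe ∧ AcceptsAt e s qe qs) :
    (par s e).after (σ ++ [.delta]) =
      s.after (σs ++ [.delta]) ×ˢ e.after (σe ++ [.delta]) := by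
  ext ⟨qs, qe⟩
  simp only [mem_after_append_delta_iff, hσ, Set.mem_prod]
  rw [and_and_and_comm]
  refine and_congr_right fun ⟨hqs, hqe⟩ => ?_
  exact quiescent_par_iff hcomp (hacc qs hqs qe hqe).1 (hacc qs hqs qe hqe).2

end Parallel

namespace IsEcosim

open LTS

variable {Qs Qe Lab : Type} {s : LTS Qs Lab} {e : LTS Qe Lab} {R : Set (Set Qs × Set Qe)}
  {X : Set Qs} {Y : Set Qe} {qs : Qs} {qe : Qe} {σ σs σe : List (ELabel Lab)} {ℓ : Lab}

theorem symm (hR : IsEcosim s e R) : IsEcosim e s (Prod.swap ⁻¹' R) := by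
  refine ⟨hR.1, fun Y X hXY => ?_⟩
  obtain ⟨outE, outS, onlyE, onlyS, inBoth, quiet⟩ := hR.2 X Y hXY
  exact ⟨outS, outE, onlyS, onlyE, fun ℓ he hs => inBoth ℓ hs he, fun he hs => quiet hs he⟩

theorem acceptsAt (hR : IsEcosim s e R) (hXY : (X, Y) ∈ R) (hqs : qs ∈ X) (hqe : qe ∈ Y) :
    AcceptsAt s e qs qe := fun ℓ hout hin =>
  mem_inSet_iff.1 ((hR.2 X Y hXY).1 ℓ (mem_outSet_iff.2 ⟨qe, hqe, hout⟩) hin).1 qs hqs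

theorem acceptsAt_symm (hR : IsEcosim s e R) (hXY : (X, Y) ∈ R) (hqs : qs ∈ X) (hqe : qe ∈ Y) :
    AcceptsAt e s qe qs :=
  hR.symm.acceptsAt hXY hqe hqs

theorem after_append_output_left_mem (hcomp : Composable s e) (hR : IsEcosim s e R)
    (hσ : (s.after σs, e.after σe) ∈ R) (hℓ : ℓ ∈ s.U)
    (hout : .lab ℓ ∈ s.outSet (s.after σs)) :
    (s.after (σs ++ projD [.lab ℓ] s.L), e.after (σe ++ projD [.lab ℓ] e.L)) ∈ R := by
  obtain ⟨-, outS, -, onlyS, -, -⟩ := hR.2 _ _ hσ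
  rw [projD_lab_of_mem (U_subset_L hℓ), after_append]
  by_cases hℓe : ℓ ∈ e.L
  · rw [projD_lab_of_mem hℓe, after_append]
    exact (outS ℓ hout (hℓe.resolve_right (hcomp.notMem_right hℓ))).2
  · rw [projD_lab_of_notMem hℓe, List.append_nil]
    exact onlyS ℓ (Or.inl hout) hℓe

theorem after_append_output_right_mem (hcomp : Composable s e) (hR : IsEcosim s e R)
    (hσ : (s.after σs, e.after σe) ∈ R) (hℓ : ℓ ∈ e.U)
    (hout : .lab ℓ ∈ e.outSet (e.after σe)) :
    (s.after (σs ++ projD [.lab ℓ] s.L), e.after (σe ++ projD [.lab ℓ] e.L)) ∈ R :=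
  (hR.symm.after_append_output_left_mem hcomp.symm (σe := σs) hσ hℓ hout :)

theorem after_append_input_mem (hR : IsEcosim s e R) (hσ : (s.after σs, e.after σe) ∈ R)
    (hℓ : ℓ ∈ s.L ∪ e.L) (hs : ℓ ∈ s.L → ℓ ∈ s.inSet (s.after σs))
    (he : ℓ ∈ e.L → ℓ ∈ e.inSet (e.after σe)) :
    (s.after (σs ++ projD [.lab ℓ] s.L), e.after (σe ++ projD [.lab ℓ] e.L)) ∈ R := by
  obtain ⟨-, -, onlyE, onlyS, inBoth, -⟩ := hR.2 _ _ hσ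
  by_cases hℓs : ℓ ∈ s.L <;> by_cases hℓe : ℓ ∈ e.L
  · rw [projD_lab_of_mem hℓs, projD_lab_of_mem hℓe, after_append, after_append]
    exact inBoth ℓ (hs hℓs) (he hℓe)
  · rw [projD_lab_of_mem hℓs, projD_lab_of_notMem hℓe, after_append, List.append_nil]
    exact onlyS ℓ (Or.inr (hs hℓs)) hℓe
  · rw [projD_lab_of_notMem hℓs, projD_lab_of_mem hℓe, List.append_nil, after_append]
    exact onlyE ℓ (Or.inr (he hℓe)) hℓs
  · exact (hℓ.elim hℓs hℓe).elim

theorem after_append_lab_mem (hcomp : Composable s e) (hR : IsEcosim s e R)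
    (hσR : (s.after σs, e.after σe) ∈ R) (hσ : (par s e).after σ = s.after σs ×ˢ e.after σe)
    (hσℓ : σ ++ [.lab ℓ] ∈ (par s e).Utraces) :
    (s.after (σs ++ projD [.lab ℓ] s.L), e.after (σe ++ projD [.lab ℓ] e.L)) ∈ R := by
  have hℓ : ℓ ∈ s.L ∪ e.L := L_par ▸ lab_mem_L_of_append_mem_Utraces hσℓ
  have hnext := nonempty_after_of_mem_Utraces hσℓ
  rw [after_par_append_lab hℓ hσ] at hnext
  by_cases hℓs : ℓ ∈ s.U
  · have hnexts := hnext.fst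
    rw [projD_lab_of_mem (U_subset_L hℓs)] at hnexts
    exact hR.after_append_output_left_mem hcomp hσR hℓs (mem_outSet_after_of_nonempty hℓs hnexts)
  by_cases hℓe : ℓ ∈ e.U
  · have hnexte := hnext.snd
    rw [projD_lab_of_mem (U_subset_L hℓe)] at hnexte
    exact hR.after_append_output_right_mem hcomp hσR hℓe (mem_outSet_after_of_nonempty hℓe hnexte)
  have hne := nonempty_after_of_mem_Utraces (mem_Utraces_of_append hσℓ)
  rw [hσ] at hne
  have hin : ℓ ∈ (par s e).I → ℓ ∈ (par s e).inSet (s.after σs ×ˢ e.after σe) :=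
    hσ ▸ lab_mem_inSet_after_of_append_mem_Utraces hσℓ
  refine hR.after_append_input_mem hσR hℓ (fun hs => ?_) fun he => ?_
  · have hI : ℓ ∈ s.I := hs.resolve_right hℓs
    exact mem_inSet_fst_of_mem_inSet_par hI hne.snd (hin (Or.inl ⟨hI, hℓe⟩))
  · have hI : ℓ ∈ e.I := he.resolve_right hℓe
    exact mem_inSet_snd_of_mem_inSet_par hI hne.fst (hin (Or.inr ⟨hI, hℓs⟩))

theorem after_append_delta_mem (hR : IsEcosim s e R) (hσ : (s.after σs, e.after σe) ∈ R)
    (hne : (s.after (σs ++ [.delta]) ×ˢ e.after (σe ++ [.delta])).Nonempty) :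
    (s.after (σs ++ [.delta]), e.after (σe ++ [.delta])) ∈ R := by
  obtain ⟨-, -, -, -, -, quiet⟩ := hR.2 _ _ hσ
  rw [after_append, after_append]
  exact quiet (mem_outSet_after_of_nonempty trivial hne.fst)
    (mem_outSet_after_of_nonempty trivial hne.snd)

theorem after_projD_mem_and_after_par_eq_prod (hcomp : Composable s e) (hR : IsEcosim s e R)
    (hσ : σ ∈ (par s e).Utraces) :
    (s.after (projD σ s.L), e.after (projD σ e.L)) ∈ R ∧
      (par s e).after σ = s.after (projD σ s.L) ×ˢ e.after (projD σ e.L) := by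
  induction σ using List.reverseRecOn with
  | nil =>
    refine ⟨hR.1, Set.ext fun p => ?_⟩
    exact W_nil_iff.trans (eps_par_iff.trans (and_congr W_nil_iff W_nil_iff).symm)
  | append_singleton σ x ih =>
    obtain ⟨hmem, hprod⟩ := ih (mem_Utraces_of_append hσ)
    rw [projD_append, projD_append]
    cases x with
    | lab ℓ =>
      have hℓ : ℓ ∈ s.L ∪ e.L := L_par ▸ lab_mem_L_of_append_mem_Utraces hσ
      exact ⟨hR.after_append_lab_mem hcomp hmem hprod hσ, after_par_append_lab hℓ hprod⟩
    | delta =>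
      rw [projD_delta, projD_delta]
      have hprodδ := after_par_append_delta hcomp hprod fun qs hqs qe hqe =>
        ⟨hR.acceptsAt hmem hqs hqe, hR.acceptsAt_symm hmem hqs hqe⟩
      have hne := nonempty_after_of_mem_Utraces hσ
      exact ⟨hR.after_append_delta_mem hmem (hprodδ ▸ hne), hprodδ⟩

theorem accepts (hcomp : Composable s e) (hR : IsEcosim s e R) : Accepts s e := by
  intro σ hσ qs qe hreach
  obtain ⟨hmem, hprod⟩ := hR.after_projD_mem_and_after_par_eq_prod hcomp hσ
  have hprodmem : (qs, qe) ∈ s.after (projD σ s.L) ×ˢ e.after (projD σ e.L) := hprod ▸ hreach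
  exact hR.acceptsAt hmem hprodmem.1 hprodmem.2

end IsEcosim

theorem eco_implies_mutually_accepts_general {Qs Qe Lab : Type}
    (s : LTS Qs Lab) (e : LTS Qe Lab) (hcomp : Composable s e) (heco : Eco s e) :
    MutuallyAccepts s e := by
  obtain ⟨R, hR⟩ := heco
  exact ⟨hR.accepts hcomp, hR.symm.accepts hcomp.symm⟩

/-- for composable `s`, `e`, `s eco e` implies that `s` mutually
accepts `e`. -/
theorem eco_implies_mutually_accepts {Qs Qe Lab : Type}
    (s : LTS Qs Lab) (e : LTS Qe Lab)
    (hs : s.WellFormed) (he : e.WellFormed)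
    (hcomp : Composable s e) (heco : Eco s e) :
    MutuallyAccepts s e :=
  eco_implies_mutually_accepts_general s e hcomp heco
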